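/- arXiv:1612.03689 — 2 statements merged into one kernel-verified Lean document; each statement's English description precedes it below -/
import Mathlib

section
/- Let μ be a probability measure on ℝ of the form dμ(t) = 1_Ω(t) ρ(t) dt where Ω is an open interval on which ρ is continuous and positive. For any open subinterval I ⊂ Ω, the restricted (renormalized) probability measure μ|_I satisfies C_P(μ|_I) ≤ C_P(μ). Consequently the map I ↦ C_P(μ|_I) is non-decreasing with respect to inclusion of intervals. -/
open MeasureTheory Real Set

/-- Variance of `f` under `μ`, as `inf_a ∫ (f-a)^2 dμ`. -/
noncomputable def Var (μ : Measure ℝ) (f : ℝ → ℝ) : ℝ := ⨅ a : ℝ, ∫ x, (f x - a)^2 ∂μ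

/-- `μ` satisfies a Poincaré inequality with constant `C`, over test functions that are
differentiable on the supporting interval `s` with `f, f' ∈ L²(μ)`. -/
def PoincareOn (μ : Measure ℝ) (s : Set ℝ) (C : ℝ) : Prop :=
  ∀ f f' : ℝ → ℝ, (∀ x ∈ s, HasDerivAt f (f' x) x) →
    Integrable (fun x => (f x)^2) μ → Integrable (fun x => (f' x)^2) μ →
    Var μ f ≤ C * ∫ x, (f' x)^2 ∂μ

/-- The optimal Poincaré constant of `μ` on the interval `s`. -/
noncomputable def CP (μ : Measure ℝ) (s : Set ℝ) : ℝ := sInf {C | 0 ≤ C ∧ PoincareOn μ s C}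

/-!
A test function on a subinterval `I` need not extend to the support of `μ` as a test function, so
first replace `I` by a compact interval `[a, b] ⊆ I`. There `f` extends beyond `b` by
`f b + f' b * (1 - exp (-k * (x - b))) / k`, and beyond `a` symmetrically. The extension is
differentiable, its variance dominates the variance of `f` on `[a, b]`, and letting `k → ∞` makes
the energy of the added tails vanish. Hence `[a, b]` inherits the Poincaré constant of `μ`;
exhausting `I` by compact intervals then gives `I` the same constant, because variance and energy
are continuous along the exhaustion. Normalizing the restricted measure multiplies both sides of
the inequality by the same factor.
-/

open Filter Topology
open scoped ENNReal ProbabilityTheory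

section NegMeasure

variable {G E : Type*} [InvolutiveNeg G] [MeasurableSpace G] [MeasurableNeg G]
  [NormedAddCommGroup E] {μ : Measure G} {g : G → E}

theorem integral_neg_measure [NormedSpace ℝ E] (μ : Measure G) (g : G → E) :
    ∫ x, g x ∂μ.neg = ∫ x, g (-x) ∂μ :=
  (MeasurableEquiv.neg G).measurableEmbedding.integral_map g

theorem integrable_neg_measure :
    Integrable g μ.neg ↔ Integrable (fun x => g (-x)) μ :=
  (MeasurableEquiv.neg G).measurableEmbedding.integrable_map_iff

end NegMeasure

section Variance

theorem integral_sub_const_sq {α : Type*} [MeasurableSpace α] {μ : Measure α} [IsFiniteMeasure μ]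
    {f : α → ℝ} (hf : MemLp f 2 μ) (a : ℝ) :
    ∫ x, (f x - a) ^ 2 ∂μ = ∫ x, (f x) ^ 2 ∂μ - μ.real univ * (⨍ x, f x ∂μ) ^ 2 +
      μ.real univ * (a - ⨍ x, f x ∂μ) ^ 2 := by
  have hf1 : Integrable f μ := hf.integrable one_le_two
  have expand : ∀ x, (f x - a) ^ 2 = (f x) ^ 2 - 2 * a * f x + a ^ 2 := fun x => by ring
  have mean : μ.real univ * ⨍ x, f x ∂μ = ∫ x, f x ∂μ := measure_smul_average μ f
  simp_rw [expand]
  rw [integral_add (f := fun x => (f x) ^ 2 - 2 * a * f x)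
      (hf.integrable_sq.sub (hf1.const_mul _)) (integrable_const _),
    integral_sub hf.integrable_sq (hf1.const_mul _), integral_const_mul, integral_const,
    smul_eq_mul, ← mean]
  ring

variable {μ : Measure ℝ} {f : ℝ → ℝ}

theorem bddBelow_range_integral_sub_sq {α : Type*} [MeasurableSpace α] (μ : Measure α)
    (f : α → ℝ) :
    BddBelow (range fun a : ℝ => ∫ x, (f x - a) ^ 2 ∂μ) :=
  ⟨0, forall_mem_range.2 fun _ => integral_nonneg fun _ => sq_nonneg _⟩

theorem Var_eq_integral_sq_sub [IsFiniteMeasure μ] (hf : MemLp f 2 μ) :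
    Var μ f = ∫ x, (f x) ^ 2 ∂μ - μ.real univ * (⨍ x, f x ∂μ) ^ 2 := by
  refine le_antisymm ?_ (le_ciInf fun a => ?_)
  · refine (ciInf_le (bddBelow_range_integral_sub_sq μ f) (⨍ x, f x ∂μ)).trans_eq ?_
    simp [integral_sub_const_sq hf]
  · rw [integral_sub_const_sq hf]
    exact le_add_of_nonneg_right (by positivity)

theorem Var_smul_measure (c : ℝ≥0∞) (μ : Measure ℝ) (f : ℝ → ℝ) :
    Var (c • μ) f = c.toReal * Var μ f := by
  simp only [Var, integral_smul_measure, smul_eq_mul]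
  exact (Real.mul_iInf_of_nonneg ENNReal.toReal_nonneg _).symm

theorem Var_neg_measure (μ : Measure ℝ) (f : ℝ → ℝ) :
    Var μ.neg f = Var μ fun x => f (-x) := by
  simp only [Var, integral_neg_measure]

theorem Var_restrict_le_piecewise [IsFiniteMeasure μ] {t : Set ℝ} [DecidablePred (· ∈ t)]
    (ht : MeasurableSet t) {g : ℝ → ℝ} (hg : MemLp g 2 (μ.restrict tᶜ)) :
    Var (μ.restrict t) f ≤ Var μ (t.piecewise f g) := by
  refine ciInf_mono (bddBelow_range_integral_sub_sq _ _) fun a => ?_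
  -- Otherwise the left-hand integral is the junk value `0`.
  by_cases hf : IntegrableOn (fun x => (f x - a) ^ 2) t μ
  · have hga : IntegrableOn (fun x => (g x - a) ^ 2) tᶜ μ := (hg.sub (memLp_const a)).integrable_sq
    have split : (fun x => (t.piecewise f g x - a) ^ 2) =
        t.piecewise (fun x => (f x - a) ^ 2) fun x => (g x - a) ^ 2 :=
      funext fun x => apply_piecewise t f g fun _ y => (y - a) ^ 2
    rw [split, integral_piecewise ht hf hga]
    exact le_add_of_nonneg_right (integral_nonneg fun _ => sq_nonneg _)
  · rw [integral_undef hf]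
    exact integral_nonneg fun _ => sq_nonneg _

theorem tendsto_Var_restrict_of_aecover [IsFiniteMeasure μ] {ι : Type*} {l : Filter ι}
    [l.IsCountablyGenerated] {K : ι → Set ℝ} (hK : AECover μ l K) (hf : MemLp f 2 μ) :
    Tendsto (fun i => Var (μ.restrict (K i)) f) l (𝓝 (Var μ f)) := by
  rcases eq_zero_or_neZero μ with rfl | hμ
  · simpa only [Measure.restrict_zero] using tendsto_const_nhds
  have mass : Tendsto (fun i => (μ.restrict (K i)).real univ) l (𝓝 (μ.real univ)) := by
    simpa using hK.integral_tendsto_of_countably_generated (integrable_const (1 : ℝ))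
  have mean : Tendsto (fun i => ⨍ x in K i, f x ∂μ) l (𝓝 (⨍ x, f x ∂μ)) := by
    simp only [average_eq]
    exact (mass.inv₀ measureReal_univ_ne_zero).smul
      (hK.integral_tendsto_of_countably_generated (hf.integrable one_le_two))
  simp_rw [Var_eq_integral_sq_sub hf, Var_eq_integral_sq_sub (hf.restrict _)]
  exact (hK.integral_tendsto_of_countably_generated hf.integrable_sq).sub (mass.mul (mean.pow 2))

end Variance

section ExpTail

/-- The profile with value `c` and slope `y` at `b` whose slope decays at the exponential rate `k`.
It is glued to the right of a function on `(-∞, b]` to extend it differentiably at little cost in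
energy; at `k = 0` it is the constant `c`, by the convention `y / 0 = 0`. -/
noncomputable def expTail (b c y k x : ℝ) : ℝ := c + y / k * (1 - exp (-(k * (x - b))))

theorem expTail_self (b c y k : ℝ) : expTail b c y k b = c := by simp [expTail]

theorem hasDerivAt_expTail {k : ℝ} (hk : k ≠ 0) (b c y x : ℝ) :
    HasDerivAt (expTail b c y k) (y * exp (-(k * (x - b)))) x := by
  have exponent : HasDerivAt (fun x => -(k * (x - b))) (-(k * 1)) x :=
    (((hasDerivAt_id x).sub_const b).const_mul k).neg
  refine (((exponent.exp.const_sub 1).const_mul (y / k)).const_add c).congr_deriv ?_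
  field_simp

variable {μ : Measure ℝ} [IsFiniteMeasure μ]

theorem memLp_exp_neg_mul_sub {k : ℝ} (hk : 0 ≤ k) (b : ℝ) :
    MemLp (fun x => exp (-(k * (x - b)))) 2 (μ.restrict (Ioi b)) := by
  refine .of_bound (Measurable.aestronglyMeasurable (by fun_prop)) 1 ?_
  filter_upwards [ae_restrict_mem measurableSet_Ioi] with x hx
  simpa using mul_nonneg hk (sub_nonneg.2 (mem_Ioi.1 hx).le)

theorem memLp_expTail {k : ℝ} (hk : 0 ≤ k) (b c y : ℝ) :
    MemLp (expTail b c y k) 2 (μ.restrict (Ioi b)) :=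
  (memLp_const c).add (((memLp_const 1).sub (memLp_exp_neg_mul_sub hk b)).const_mul (y / k))

variable (μ) in
theorem tendsto_integral_sq_slope_expTail (b y : ℝ) :
    Tendsto (fun k => ∫ x in Ioi b, (y * exp (-(k * (x - b)))) ^ 2 ∂μ) atTop (𝓝 0) := by
  rw [← integral_zero ℝ ℝ (μ := μ.restrict (Ioi b))]
  refine tendsto_integral_filter_of_dominated_convergence (fun _ => y ^ 2)
    (.of_forall fun k => Measurable.aestronglyMeasurable (by fun_prop)) ?_ (integrable_const _) ?_
  · filter_upwards [eventually_ge_atTop 0] with k hk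
    filter_upwards [ae_restrict_mem measurableSet_Ioi] with x hx
    have slope_le_one : exp (-(k * (x - b))) ≤ 1 :=
      exp_le_one_iff.2 (neg_nonpos.2 (mul_nonneg hk (sub_nonneg.2 (mem_Ioi.1 hx).le)))
    rw [norm_of_nonneg (sq_nonneg _), mul_pow]
    exact mul_le_of_le_one_right (sq_nonneg y) (pow_le_one₀ (exp_nonneg _) slope_le_one)
  · filter_upwards [ae_restrict_mem measurableSet_Ioi] with x hx
    have slope_tendsto : Tendsto (fun k => exp (-(k * (x - b)))) atTop (𝓝 0) :=
      tendsto_exp_neg_atTop_nhds_zero.comp (tendsto_id.atTop_mul_const (sub_pos.2 hx))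
    simpa using (slope_tendsto.const_mul y).pow 2

end ExpTail

theorem hasDerivAt_piecewise_Iic {F : Type*} [NormedAddCommGroup F] [NormedSpace ℝ F]
    {f g f' g' : ℝ → F} {b x : ℝ} (hb : f b = g b) (hb' : f' b = g' b)
    (hf : x ≤ b → HasDerivAt f (f' x) x) (hg : b ≤ x → HasDerivAt g (g' x) x) :
    HasDerivAt ((Iic b).piecewise f g) ((Iic b).piecewise f' g' x) x := by
  have eq_left : EqOn ((Iic b).piecewise f g) f (Iic b) := piecewise_eqOn _ _ _
  have eq_right : EqOn ((Iic b).piecewise f g) g (Ici b) := fun z (hz : b ≤ z) => by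
    rcases hz.eq_or_lt with rfl | hz
    · simp [hb]
    · simp [hz.not_ge]
  rcases lt_trichotomy x b with hx | rfl | hx
  · simpa [hx.le] using (hf hx.le).congr_of_eventuallyEq
      (eq_left.eventuallyEq_of_mem (Iic_mem_nhds hx))
  · have left := (hf le_rfl).hasDerivWithinAt.congr eq_left (eq_left self_mem_Iic)
    have right := (hg le_rfl).hasDerivWithinAt.congr eq_right (eq_right self_mem_Ici)
    rw [← hb'] at right
    simpa [Iic_union_Ici] using left.union right
  · simpa [hx.not_ge] using (hg hx.le).congr_of_eventuallyEq
      (eq_right.eventuallyEq_of_mem (Ici_mem_nhds hx))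

theorem aecover_restrict_Icc {α : Type*} [Preorder α] [TopologicalSpace α]
    [OrderClosedTopology α] [MeasurableSpace α] [OpensMeasurableSpace α] {I : Set α}
    (hI : MeasurableSet I) (μ : Measure α) :
    AECover (μ.restrict I) (atBot ×ˢ atTop) fun p : I × I => Icc (p.1 : α) p.2 where
  ae_eventually_mem := by
    filter_upwards [ae_restrict_mem hI] with x hx
    exact (eventually_le_atBot (⟨x, hx⟩ : I)).prod_mk (eventually_ge_atTop (⟨x, hx⟩ : I))
  measurableSet _ := measurableSet_Icc

theorem CP_nonneg (μ : Measure ℝ) (s : Set ℝ) : 0 ≤ CP μ s :=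
  Real.sInf_nonneg fun _ hC => hC.1

namespace PoincareOn

variable {μ : Measure ℝ} {s : Set ℝ} {C : ℝ}

theorem mono_set {t : Set ℝ} (h : PoincareOn μ s C) (hst : s ⊆ t) : PoincareOn μ t C :=
  fun f f' hf => h f f' fun x hx => hf x (hst hx)

theorem smul_measure (h : PoincareOn μ s C) (c : ℝ≥0∞) : PoincareOn (c • μ) s C := by
  intro f f' hf hf2 hf'2
  rw [Var_smul_measure, integral_smul_measure, smul_eq_mul, mul_left_comm]
  by_cases hc : c.toReal = 0
  · simp [hc]
  obtain ⟨hc0, hctop⟩ := ENNReal.toReal_ne_zero.1 hc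
  rw [integrable_smul_measure hc0 hctop] at hf2 hf'2
  exact mul_le_mul_of_nonneg_left (h f f' hf hf2 hf'2) ENNReal.toReal_nonneg

theorem neg (h : PoincareOn μ s C) : PoincareOn μ.neg (-s) C := by
  intro f f' hf hf2 hf'2
  rw [integrable_neg_measure] at hf2 hf'2
  have hf_neg : ∀ x ∈ s, HasDerivAt (fun x => f (-x)) (-f' (-x)) x := fun x hx => by
    have hfx : HasDerivAt f (f' (-x)) (-x) := hf (-x) (by simpa using hx)
    simpa [Function.comp_def] using hfx.scomp x (hasDerivAt_neg x)
  simpa [Var_neg_measure, integral_neg_measure] using h _ _ hf_neg hf2 (by simpa using hf'2)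

variable [IsFiniteMeasure μ]

theorem restrict_Iic (h : PoincareOn μ s C) (b : ℝ) :
    PoincareOn (μ.restrict (Iic b)) (s ∩ Iic b) C := by
  intro f f' hf hf2 hf'2
  let F (k : ℝ) : ℝ → ℝ := (Iic b).piecewise f (expTail b (f b) (f' b) k)
  let F' (k : ℝ) : ℝ → ℝ := (Iic b).piecewise f' fun x => f' b * exp (-(k * (x - b)))
  have sq_piecewise (g g' : ℝ → ℝ) : (fun x => ((Iic b).piecewise g g' x) ^ 2) =
      (Iic b).piecewise (fun x => (g x) ^ 2) fun x => (g' x) ^ 2 :=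
    funext fun x => apply_piecewise (Iic b) g g' fun _ y => y ^ 2
  have bound (k : ℝ) (hk : 0 < k) : Var (μ.restrict (Iic b)) f ≤
      C * (∫ x in Iic b, (f' x) ^ 2 ∂μ + ∫ x in Ioi b, (f' b * exp (-(k * (x - b)))) ^ 2 ∂μ) := by
    have tail : MemLp (expTail b (f b) (f' b) k) 2 (μ.restrict (Iic b)ᶜ) := by
      simpa only [compl_Iic] using memLp_expTail hk.le b (f b) (f' b)
    have tail' : MemLp (fun x => f' b * exp (-(k * (x - b)))) 2 (μ.restrict (Iic b)ᶜ) := by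
      simpa only [compl_Iic] using (memLp_exp_neg_mul_sub hk.le b).const_mul (f' b)
    have hF : ∀ x ∈ s, HasDerivAt (F k) (F' k x) x := fun x hx =>
      hasDerivAt_piecewise_Iic (expTail_self _ _ _ _).symm (by simp) (fun hxb => hf x ⟨hx, hxb⟩)
        fun _ => hasDerivAt_expTail hk.ne' _ _ _ _
    have hF2 : Integrable (fun x => (F k x) ^ 2) μ := by
      rw [sq_piecewise]
      exact .piecewise measurableSet_Iic hf2 tail.integrable_sq
    have hF'2 : Integrable (fun x => (F' k x) ^ 2) μ := by
      rw [sq_piecewise]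
      exact .piecewise measurableSet_Iic hf'2 tail'.integrable_sq
    calc Var (μ.restrict (Iic b)) f ≤ Var μ (F k) :=
          Var_restrict_le_piecewise measurableSet_Iic tail
      _ ≤ C * ∫ x, (F' k x) ^ 2 ∂μ := h _ _ hF hF2 hF'2
      _ = _ := by
          rw [sq_piecewise, integral_piecewise measurableSet_Iic hf'2 tail'.integrable_sq,
            compl_Iic]
  refine ge_of_tendsto ?_ ((eventually_gt_atTop 0).mono bound)
  simpa using ((tendsto_integral_sq_slope_expTail μ b (f' b)).const_add _).const_mul C

theorem restrict_Ici (h : PoincareOn μ s C) (a : ℝ) :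
    PoincareOn (μ.restrict (Ici a)) (s ∩ Ici a) C := by
  have reflect : (μ.neg.restrict (Iic (-a))).neg = μ.restrict (Ici a) := by
    rw [Measure.neg_def, Measure.neg_def, Measure.restrict_map measurable_neg measurableSet_Iic,
      Measure.map_map measurable_neg measurable_neg]
    simp
  have : IsFiniteMeasure μ.neg := Measure.isFiniteMeasure_map μ Neg.neg
  simpa [reflect] using (h.neg.restrict_Iic (-a)).neg

theorem restrict_Icc (h : PoincareOn μ s C) (a b : ℝ) :
    PoincareOn (μ.restrict (Icc a b)) (s ∩ Icc a b) C := by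
  have := (h.restrict_Iic b).restrict_Ici a
  rwa [Measure.restrict_restrict measurableSet_Ici, inter_assoc, inter_comm (Iic b),
    Ici_inter_Iic] at this

theorem of_aecover {ι : Type*} {l : Filter ι} [l.NeBot] [l.IsCountablyGenerated] {K : ι → Set ℝ}
    (hK : AECover μ l K) (hs : MeasurableSet s) (hμs : ∀ᵐ x ∂μ, x ∈ s)
    (h : ∀ i, PoincareOn (μ.restrict (K i)) s C) : PoincareOn μ s C := by
  intro f f' hf hf2 hf'2
  have hfm : AEStronglyMeasurable f μ := by
    rw [← Measure.restrict_eq_self_of_ae_mem hμs]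
    exact ContinuousOn.aestronglyMeasurable (fun x hx => (hf x hx).continuousAt.continuousWithinAt)
      hs
  have hfL : MemLp f 2 μ := (memLp_two_iff_integrable_sq hfm).2 hf2
  exact le_of_tendsto_of_tendsto' (tendsto_Var_restrict_of_aecover hK hfL)
    ((hK.integral_tendsto_of_countably_generated hf'2).const_mul C)
    fun i => h i f f' hf hf2.restrict hf'2.restrict

theorem restrict {I : Set ℝ} (h : PoincareOn μ s C) (hI : I.OrdConnected) :
    PoincareOn (μ.restrict I) I C := by
  rcases I.eq_empty_or_nonempty with rfl | hne
  · intro f f' _ _ _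
    simp [Var]
  have : Nonempty I := hne.to_subtype
  have hIm : MeasurableSet I := hI.measurableSet
  refine of_aecover (aecover_restrict_Icc hIm μ) hIm (ae_restrict_mem hIm) fun p => ?_
  have hpI : Icc (p.1 : ℝ) p.2 ⊆ I := hI.out p.1.2 p.2.2
  rw [Measure.restrict_restrict measurableSet_Icc, inter_eq_left.2 hpI]
  exact (h.restrict_Icc p.1 p.2).mono_set (inter_subset_right.trans hpI)

theorem cond {I : Set ℝ} (h : PoincareOn μ s C) (hI : I.OrdConnected) : PoincareOn μ[|I] I C :=
  (h.restrict hI).smul_measure _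

theorem CP_cond_le {I : Set ℝ} (h : PoincareOn μ s C) (hC : 0 ≤ C) (hI : I.OrdConnected) :
    CP μ[|I] I ≤ CP μ s :=
  csInf_le_csInf ⟨0, fun _ hD => hD.1⟩ ⟨C, hC, h⟩ fun _ hD => ⟨hD.1, hD.2.cond hI⟩

theorem CP_cond_mono {I J : Set ℝ} (h : PoincareOn μ s C) (hC : 0 ≤ C) (hI : I.OrdConnected)
    (hJ : J.OrdConnected) (hIJ : I ⊆ J) : CP μ[|I] I ≤ CP μ[|J] J := by
  rw [← inter_eq_right.2 hIJ, ← ProbabilityTheory.cond_cond_eq_cond_inter hJ.measurableSet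
    hI.measurableSet μ, inter_eq_right.2 hIJ]
  exact (h.cond hJ).CP_cond_le hC hI

end PoincareOn

theorem stmt3_general (μ : Measure ℝ) [IsFiniteMeasure μ] (s : Set ℝ)
    (h : ∃ C, 0 ≤ C ∧ PoincareOn μ s C) :
    (∀ I : Set ℝ, I.OrdConnected → CP ((μ I)⁻¹ • μ.restrict I) I ≤ CP μ s) ∧
    (∀ I J : Set ℝ, I.OrdConnected → J.OrdConnected → I ⊆ J →
      CP ((μ I)⁻¹ • μ.restrict I) I ≤ CP ((μ J)⁻¹ • μ.restrict J) J) := by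
  obtain ⟨C, hC, hμ⟩ := h
  exact ⟨fun _ hI => hμ.CP_cond_le hC hI, fun _ _ hI hJ hIJ => hμ.CP_cond_mono hC hI hJ hIJ⟩

/-- the Poincaré constant cannot increase by restriction to a subinterval,
and the map `I ↦ C_P(μ|_I)` is non-decreasing. -/
theorem stmt3 (Ω : Set ℝ) (hΩo : IsOpen Ω) (hΩc : Ω.OrdConnected) (hΩne : Ω.Nonempty)
    (ρ : ℝ → ℝ) (hc : ContinuousOn ρ Ω) (hpos : ∀ x ∈ Ω, 0 < ρ x) (h0 : ∀ x ∉ Ω, ρ x = 0)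
    (μ : Measure ℝ) (hμ : μ = MeasureTheory.volume.withDensity fun t => ENNReal.ofReal (ρ t))
    [IsProbabilityMeasure μ]
    (hCP : PoincareOn μ Ω (CP μ Ω)) :
    (∀ I : Set ℝ, IsOpen I → I.OrdConnected → I.Nonempty → I ⊆ Ω →
      CP ((μ I)⁻¹ • μ.restrict I) I ≤ CP μ Ω) ∧
    (∀ I J : Set ℝ, IsOpen I → I.OrdConnected → I.Nonempty →
      IsOpen J → J.OrdConnected → I ⊆ J → J ⊆ Ω →
      CP ((μ I)⁻¹ • μ.restrict I) I ≤ CP ((μ J)⁻¹ • μ.restrict J) J) := by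
  obtain ⟨le, mono⟩ := stmt3_general μ Ω ⟨CP μ Ω, CP_nonneg μ Ω, hCP⟩
  exact ⟨fun I _ hI _ _ => le I hI, fun I J _ hI _ _ hJ hIJ _ => mono I J hI hJ hIJ⟩
end

section
/- Let μ be the double exponential measure restricted to a symmetric interval [−b, b]. Then the optimal Poincaré constant equals (1/4 + ω²)^{−1}, where ω is the unique zero of x ↦ 2·cotan(bx) + 1/x on (0, π/b), and the inequality is saturated by f(x) = e^{|x|/2} sin(ωx). -/
open MeasureTheory Real Set

/-! With `w = e^{-|x|} / 2`, the function `u = e^{|x|/2} sin (ω x)` solves the Sturm–Liouville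
equation `(u' w)' = -λ u w` with `λ = 1/4 + ω²`, also at the origin, and the equation for `ω` is
exactly the Neumann condition `u' (±b) = 0`. Moreover `u` is increasing on `(-b, b)` and vanishes at
`0`.
Picone's identity
`(h² u' w / u)' = h'² w - λ h² w - (h' - h u' / u)² w`
with `h = g - g 0`, integrated over `(-b, 0)` and `(0, b)`, gives `λ ∫ h² w ≤ ∫ g'² w`: the boundary
terms vanish at `0` and have the favourable sign at `±b` because `u` is increasing. Integrating the
equation for `u` against `1` and `u` shows that `u` has mean zero and attains equality.
-/

open Filter Topology

/-! ### Sturm–Liouville equations and Picone's identity -/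

theorem sub_le_integral_of_hasDerivAt_of_eventually_le {a b m M : ℝ} {G G' F : ℝ → ℝ}
    (hab : a < b) (hG : ∀ x ∈ Ioo a b, HasDerivAt G (G' x) x) (hle : ∀ x ∈ Ioo a b, G' x ≤ F x)
    (hF : IntervalIntegrable F volume a b) (hM : ∀ᶠ x in 𝓝[>] a, G x ≤ M)
    (hm : ∀ᶠ x in 𝓝[<] b, m ≤ G x) : m - M ≤ ∫ x in a..b, F x := by
  set P : ℝ → ℝ := fun x => ∫ t in a..x, F t
  have hsub : ∀ {x y}, x ∈ Ioo a b → y ∈ Ioo a b → x ≤ y → G y - G x ≤ P y - P x := by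
    intro x y hx hy hxy
    have hIcc : Icc x y ⊆ Ioo a b := Icc_subset_Ioo hx.1 hy.2
    have hF_int : ∀ {z}, z ∈ Ioo a b → IntervalIntegrable F volume a z := fun hz =>
      hF.mono_set (uIcc_subset_uIcc_left (Icc_subset_uIcc (Ioo_subset_Icc_self hz)))
    rw [intervalIntegral.integral_interval_sub_left (hF_int hy) (hF_int hx)]
    exact intervalIntegral.sub_le_integral_of_hasDeriv_right_of_le hxy
      (fun z hz => (hG z (hIcc hz)).continuousAt.continuousWithinAt)
      (fun z hz => (hG z (hIcc (Ioo_subset_Icc_self hz))).hasDerivWithinAt)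
      (((intervalIntegrable_iff_integrableOn_Ioo_of_le hab.le).1 hF).mono_set hIcc)
      (fun z hz => hle z (hIcc (Ioo_subset_Icc_self hz)))
  have hPcont : ContinuousOn P (Icc a b) := by
    rw [← uIcc_of_le hab.le]
    exact intervalIntegral.continuousOn_primitive_interval' hF left_mem_uIcc
  have hPa : Tendsto P (𝓝[>] a) (𝓝 (P a)) :=
    ((hPcont a (left_mem_Icc.2 hab.le)).mono Ioc_subset_Icc_self).tendsto.mono_left
      (nhdsWithin_Ioc_eq_nhdsGT hab).ge
  have hPb : Tendsto P (𝓝[<] b) (𝓝 (P b)) :=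
    ((hPcont b (right_mem_Icc.2 hab.le)).mono Ico_subset_Icc_self).tendsto.mono_left
      (nhdsWithin_Ico_eq_nhdsLT hab).ge
  have hlim := (hPb.comp tendsto_snd).sub (hPa.comp (tendsto_fst (g := 𝓝[<] b)))
  rw [show P a = 0 from intervalIntegral.integral_same, sub_zero] at hlim
  obtain ⟨c, hac, hcb⟩ := exists_between hab
  refine ge_of_tendsto hlim ?_
  filter_upwards [(hM.and (Ioo_mem_nhdsGT hac)).prod_mk (hm.and (Ioo_mem_nhdsLT hcb))]
    with ⟨x, y⟩ ⟨⟨hxM, hx⟩, hmy, hy⟩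
  calc m - M ≤ G y - G x := sub_le_sub hmy hxM
    _ ≤ P y - P x := hsub ⟨hx.1, hx.2.trans hcb⟩ ⟨hac.trans hy.1, hy.2⟩ (hx.2.trans hy.1).le

/-- `u`, with derivative `u'`, solves the Sturm–Liouville equation `(u' w)' = -lam u w` on `s`. For
`w = e^{-V}` this is the eigenvalue equation `u'' - V' u' = -lam u`, in a divergence form that only
requires the flux `u' w` to be differentiable. -/
structure IsSturmLiouvilleSolution (w : ℝ → ℝ) (lam : ℝ) (u u' : ℝ → ℝ) (s : Set ℝ) : Prop where
  hasDerivAt : ∀ x ∈ s, HasDerivAt u (u' x) x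
  hasDerivAt_flux : ∀ x ∈ s, HasDerivAt (fun y => u' y * w y) (-lam * (u x * w x)) x

namespace IsSturmLiouvilleSolution

variable {w u u' : ℝ → ℝ} {lam a b c : ℝ} {s t : Set ℝ}

theorem mono (hu : IsSturmLiouvilleSolution w lam u u' t) (hst : s ⊆ t) :
    IsSturmLiouvilleSolution w lam u u' s :=
  ⟨fun x hx => hu.hasDerivAt x (hst hx), fun x hx => hu.hasDerivAt_flux x (hst hx)⟩

theorem continuousOn (hu : IsSturmLiouvilleSolution w lam u u' s) : ContinuousOn u s :=
  fun x hx => (hu.hasDerivAt x hx).continuousAt.continuousWithinAt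

theorem continuousOn_flux (hu : IsSturmLiouvilleSolution w lam u u' s) :
    ContinuousOn (fun x => u' x * w x) s :=
  fun x hx => (hu.hasDerivAt_flux x hx).continuousAt.continuousWithinAt

theorem continuousOn_deriv (hu : IsSturmLiouvilleSolution w lam u u' s) (hw : ContinuousOn w s)
    (hw0 : ∀ x ∈ s, w x ≠ 0) : ContinuousOn u' s :=
  (hu.continuousOn_flux.div hw hw0).congr fun x hx => (mul_div_cancel_right₀ _ (hw0 x hx)).symm

theorem hasDerivAt_picone (hu : IsSturmLiouvilleSolution w lam u u' s) {x : ℝ} (hx : x ∈ s)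
    (hux : u x ≠ 0) {h : ℝ → ℝ} {h' : ℝ} (hh : HasDerivAt h h' x) :
    HasDerivAt (fun y => h y ^ 2 * (u' y * w y) / u y)
      (h' ^ 2 * w x - lam * (h x ^ 2 * w x) - (h' - h x * u' x / u x) ^ 2 * w x) x := by
  refine (((hh.fun_pow 2).fun_mul (hu.hasDerivAt_flux x hx)).fun_div
    (hu.hasDerivAt x hx) hux).congr_deriv ?_
  field_simp
  push_cast
  ring

theorem tendsto_picone_zero (hu : IsSturmLiouvilleSolution w lam u u' s) (hc : c ∈ s)
    (huc : u c = 0) (hu'c : u' c ≠ 0) {h : ℝ → ℝ} {h' : ℝ} (hh : HasDerivAt h h' c)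
    (hhc : h c = 0) :
    Tendsto (fun x => h x ^ 2 * (u' x * w x) / u x) (𝓝[≠] c) (𝓝 0) := by
  have hlim_h : Tendsto h (𝓝[≠] c) (𝓝 0) := by
    simpa only [hhc] using hh.continuousAt.tendsto.mono_left nhdsWithin_le_nhds
  have hlim_flux : Tendsto (fun x => u' x * w x) (𝓝[≠] c) (𝓝 (u' c * w c)) :=
    (hu.hasDerivAt_flux c hc).continuousAt.tendsto.mono_left nhdsWithin_le_nhds
  have hlim := ((hlim_h.mul hh.tendsto_slope).div (hu.hasDerivAt c hc).tendsto_slope hu'c).mul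
    hlim_flux
  rw [zero_mul, zero_div, zero_mul] at hlim
  refine hlim.congr' ?_
  filter_upwards [self_mem_nhdsWithin] with x hx
  have hxc : x - c ≠ 0 := sub_ne_zero.2 hx
  simp only [Pi.div_apply, slope_def_field, huc, hhc, sub_zero]
  field_simp

theorem integral_sq_add_boundary_le {m M : ℝ} (hab : a < b)
    (hu : IsSturmLiouvilleSolution w lam u u' (Ioo a b)) (hw : ∀ x ∈ Ioo a b, 0 ≤ w x)
    (hu0 : ∀ x ∈ Ioo a b, u x ≠ 0) {h h' : ℝ → ℝ} (hh : ∀ x ∈ Ioo a b, HasDerivAt h (h' x) x)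
    (hi : IntervalIntegrable (fun x => h x ^ 2 * w x) volume a b)
    (hi' : IntervalIntegrable (fun x => h' x ^ 2 * w x) volume a b)
    (hM : ∀ᶠ x in 𝓝[>] a, h x ^ 2 * (u' x * w x) / u x ≤ M)
    (hm : ∀ᶠ x in 𝓝[<] b, m ≤ h x ^ 2 * (u' x * w x) / u x) :
    lam * (∫ x in a..b, h x ^ 2 * w x) + (m - M) ≤ ∫ x in a..b, h' x ^ 2 * w x := by
  have hboundary := sub_le_integral_of_hasDerivAt_of_eventually_le hab
    (fun x hx => hu.hasDerivAt_picone hx (hu0 x hx) (hh x hx))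
    (fun x hx => sub_le_self _ (mul_nonneg (sq_nonneg _) (hw x hx)))
    (hi'.sub (hi.const_mul lam)) hM hm
  rw [intervalIntegral.integral_sub hi' (hi.const_mul lam),
    intervalIntegral.integral_const_mul] at hboundary
  linarith

theorem integral_sq_le_of_pos (hab : a < b) (hu : IsSturmLiouvilleSolution w lam u u' (Ico a b))
    (hw : ∀ x ∈ Ioo a b, 0 ≤ w x) (hua : u a = 0) (hu'a : u' a ≠ 0) (hu0 : ∀ x ∈ Ioo a b, 0 < u x)
    (hu'0 : ∀ x ∈ Ioo a b, 0 ≤ u' x) {h h' : ℝ → ℝ}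
    (hh : ∀ x ∈ Ico a b, HasDerivAt h (h' x) x) (hha : h a = 0)
    (hi : IntervalIntegrable (fun x => h x ^ 2 * w x) volume a b)
    (hi' : IntervalIntegrable (fun x => h' x ^ 2 * w x) volume a b) :
    lam * (∫ x in a..b, h x ^ 2 * w x) ≤ ∫ x in a..b, h' x ^ 2 * w x := by
  have ha : a ∈ Ico a b := left_mem_Ico.2 hab
  have hlim := (hu.tendsto_picone_zero ha hua hu'a (hh a ha) hha).mono_left (nhdsGT_le_nhdsNE a)
  refine le_of_forall_pos_le_add fun ε hε => ?_
  have := (hu.mono Ioo_subset_Ico_self).integral_sq_add_boundary_le (m := 0) (M := ε) hab hw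
    (fun x hx => (hu0 x hx).ne') (fun x hx => hh x (Ioo_subset_Ico_self hx)) hi hi'
    (hlim.eventually_le_const hε) <| by
      filter_upwards [Ioo_mem_nhdsLT hab] with x hx
      exact div_nonneg (mul_nonneg (sq_nonneg _) (mul_nonneg (hu'0 x hx) (hw x hx))) (hu0 x hx).le
  linarith

theorem integral_sq_le_of_neg (hab : a < b) (hu : IsSturmLiouvilleSolution w lam u u' (Ioc a b))
    (hw : ∀ x ∈ Ioo a b, 0 ≤ w x) (hub : u b = 0) (hu'b : u' b ≠ 0) (hu0 : ∀ x ∈ Ioo a b, u x < 0)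
    (hu'0 : ∀ x ∈ Ioo a b, 0 ≤ u' x) {h h' : ℝ → ℝ}
    (hh : ∀ x ∈ Ioc a b, HasDerivAt h (h' x) x) (hhb : h b = 0)
    (hi : IntervalIntegrable (fun x => h x ^ 2 * w x) volume a b)
    (hi' : IntervalIntegrable (fun x => h' x ^ 2 * w x) volume a b) :
    lam * (∫ x in a..b, h x ^ 2 * w x) ≤ ∫ x in a..b, h' x ^ 2 * w x := by
  have hb : b ∈ Ioc a b := right_mem_Ioc.2 hab
  have hlim := (hu.tendsto_picone_zero hb hub hu'b (hh b hb) hhb).mono_left (nhdsLT_le_nhdsNE b)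
  refine le_of_forall_pos_le_add fun ε hε => ?_
  have := (hu.mono Ioo_subset_Ioc_self).integral_sq_add_boundary_le (m := -ε) (M := 0) hab hw
    (fun x hx => (hu0 x hx).ne) (fun x hx => hh x (Ioo_subset_Ioc_self hx)) hi hi'
    (by
      filter_upwards [Ioo_mem_nhdsGT hab] with x hx
      exact div_nonpos_of_nonneg_of_nonpos
        (mul_nonneg (sq_nonneg _) (mul_nonneg (hu'0 x hx) (hw x hx))) (hu0 x hx).le)
    (hlim.eventually_const_le (neg_lt_zero.2 hε))
  linarith

theorem strictMonoOn (hu : IsSturmLiouvilleSolution w lam u u' (Ioo a b))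
    (hu' : ∀ x ∈ Ioo a b, 0 < u' x) : StrictMonoOn u (Ioo a b) :=
  strictMonoOn_of_hasDerivWithinAt_pos (convex_Ioo a b) hu.continuousOn
    (fun x hx => (hu.hasDerivAt x (interior_subset hx)).hasDerivWithinAt)
    (fun x hx => hu' x (interior_subset hx))

theorem integral_sq_sub_le (hu : IsSturmLiouvilleSolution w lam u u' (Ioo a b))
    (hw : ∀ x ∈ Ioo a b, 0 ≤ w x) (hu' : ∀ x ∈ Ioo a b, 0 < u' x) (hc : c ∈ Ioo a b)
    (huc : u c = 0) {g g' : ℝ → ℝ} (hg : ∀ x ∈ Ioo a b, HasDerivAt g (g' x) x)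
    (hi : IntervalIntegrable (fun x => (g x - g c) ^ 2 * w x) volume a b)
    (hi' : IntervalIntegrable (fun x => g' x ^ 2 * w x) volume a b) :
    lam * (∫ x in a..b, (g x - g c) ^ 2 * w x) ≤ ∫ x in a..b, g' x ^ 2 * w x := by
  have hmono := hu.strictMonoOn hu'
  have hleft : Ioc a c ⊆ Ioo a b := Ioc_subset_Ioo_right hc.2
  have hright : Ico c b ⊆ Ioo a b := Ico_subset_Ioo_left hc.1
  have hcI : c ∈ uIcc a b := Icc_subset_uIcc (Ioo_subset_Icc_self hc)
  have hi_left := hi.mono_set (uIcc_subset_uIcc_left hcI)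
  have hi_right := hi.mono_set (uIcc_subset_uIcc_right hcI)
  have hi'_left := hi'.mono_set (uIcc_subset_uIcc_left hcI)
  have hi'_right := hi'.mono_set (uIcc_subset_uIcc_right hcI)
  have hL := (hu.mono hleft).integral_sq_le_of_neg hc.1
    (fun x hx => hw x (hleft (Ioo_subset_Ioc_self hx))) huc (hu' c hc).ne'
    (fun x hx => (hmono (hleft (Ioo_subset_Ioc_self hx)) hc hx.2).trans_eq huc)
    (fun x hx => (hu' x (hleft (Ioo_subset_Ioc_self hx))).le)
    (fun x hx => (hg x (hleft hx)).sub_const (g c)) (sub_self _) hi_left hi'_left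
  have hR := (hu.mono hright).integral_sq_le_of_pos hc.2
    (fun x hx => hw x (hright (Ioo_subset_Ico_self hx))) huc (hu' c hc).ne'
    (fun x hx => huc.symm.trans_lt (hmono hc (hright (Ioo_subset_Ico_self hx)) hx.1))
    (fun x hx => (hu' x (hright (Ioo_subset_Ico_self hx))).le)
    (fun x hx => (hg x (hright hx)).sub_const (g c)) (sub_self _) hi_right hi'_right
  rw [← intervalIntegral.integral_add_adjacent_intervals hi_left hi_right,
    ← intervalIntegral.integral_add_adjacent_intervals hi'_left hi'_right]
  linarith

theorem mul_integral_eq_zero (hu : IsSturmLiouvilleSolution w lam u u' (uIcc a b))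
    (hw : ContinuousOn w (uIcc a b)) (ha : u' a = 0) (hb : u' b = 0) :
    lam * ∫ x in a..b, u x * w x = 0 := by
  have h := intervalIntegral.integral_eq_sub_of_hasDerivAt hu.hasDerivAt_flux
    (continuousOn_const.mul (hu.continuousOn.mul hw)).intervalIntegrable
  rw [intervalIntegral.integral_const_mul, ha, hb] at h
  linarith

theorem mul_integral_sq_eq (hu : IsSturmLiouvilleSolution w lam u u' (uIcc a b))
    (hw : ContinuousOn w (uIcc a b)) (hw0 : ∀ x ∈ uIcc a b, w x ≠ 0) (ha : u' a = 0)
    (hb : u' b = 0) : lam * ∫ x in a..b, u x ^ 2 * w x = ∫ x in a..b, u' x ^ 2 * w x := by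
  have hparts := intervalIntegral.integral_mul_deriv_eq_deriv_mul hu.hasDerivAt hu.hasDerivAt_flux
    (hu.continuousOn_deriv hw hw0).intervalIntegrable
    (continuousOn_const.mul (hu.continuousOn.mul hw)).intervalIntegrable
  have hsq : ∀ x, u x * (-lam * (u x * w x)) = -lam * (u x ^ 2 * w x) := fun x => by ring
  have hsq' : ∀ x, u' x * (u' x * w x) = u' x ^ 2 * w x := fun x => by ring
  simp only [hsq, hsq', intervalIntegral.integral_const_mul, ha, hb] at hparts
  linarith

end IsSturmLiouvilleSolution

/-! ### Variance and Poincaré inequalities -/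

theorem Var_le_integral_sq_sub (μ : Measure ℝ) (f : ℝ → ℝ) (a : ℝ) :
    Var μ f ≤ ∫ x, (f x - a) ^ 2 ∂μ :=
  ciInf_le ⟨0, forall_mem_range.2 fun _ => integral_nonneg fun _ => sq_nonneg _⟩ a

theorem integral_sq_le_Var {μ : Measure ℝ} [IsFiniteMeasure μ] {f : ℝ → ℝ} (hf : MemLp f 2 μ)
    (hmean : ∫ x, f x ∂μ = 0) : ∫ x, f x ^ 2 ∂μ ≤ Var μ f := by
  refine le_ciInf fun a => ?_
  have hcross : Integrable (fun x => 2 * a * f x) μ :=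
    (hf.integrable one_le_two).const_mul (2 * a)
  calc ∫ x, f x ^ 2 ∂μ
      = ∫ x, f x ^ 2 - 2 * a * f x ∂μ := by
        rw [integral_sub hf.integrable_sq hcross, integral_const_mul, hmean, mul_zero, sub_zero]
    _ ≤ ∫ x, (f x - a) ^ 2 ∂μ :=
        integral_mono (hf.integrable_sq.sub hcross) (hf.sub (memLp_const a)).integrable_sq
          fun x => by nlinarith [sq_nonneg a]

theorem PoincareOn.le_of_integral_sq_eq {μ : Measure ℝ} [IsFiniteMeasure μ] {s : Set ℝ} {C C' : ℝ}
    (hP : PoincareOn μ s C') {f f' : ℝ → ℝ} (hf : ∀ x ∈ s, HasDerivAt f (f' x) x)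
    (hfL2 : MemLp f 2 μ) (hf' : Integrable (fun x => f' x ^ 2) μ) (hmean : ∫ x, f x ∂μ = 0)
    (hsat : ∫ x, f x ^ 2 ∂μ = C * ∫ x, f' x ^ 2 ∂μ) (hpos : 0 < ∫ x, f' x ^ 2 ∂μ) : C ≤ C' := by
  refine le_of_mul_le_mul_right ?_ hpos
  calc C * ∫ x, f' x ^ 2 ∂μ = ∫ x, f x ^ 2 ∂μ := hsat.symm
    _ ≤ Var μ f := integral_sq_le_Var hfL2 hmean
    _ ≤ C' * ∫ x, f' x ^ 2 ∂μ := hP f f' hf hfL2.integrable_sq hf'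

/-! ### Probability measures with a density on an interval -/

/-- The measure with density `w`, restricted to `[a, b]` and renormalized to a probability
measure. Negative values of `w` are truncated to `0`. -/
noncomputable def probWithDensityOn (w : ℝ → ℝ) (a b : ℝ) : Measure ℝ :=
  ProbabilityTheory.cond (volume.withDensity fun t => ENNReal.ofReal (w t)) (Icc a b)

section ProbWithDensityOn

variable {w : ℝ → ℝ} {a b : ℝ}

theorem withDensity_ofReal_Icc (hw : Continuous w) (hpos : ∀ x, 0 < w x) (hab : a ≤ b) :
    volume.withDensity (fun t => ENNReal.ofReal (w t)) (Icc a b) =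
      ENNReal.ofReal (∫ x in a..b, w x) := by
  rw [withDensity_apply _ measurableSet_Icc, intervalIntegral.integral_of_le hab,
    ← integral_Icc_eq_integral_Ioc, ofReal_integral_eq_lintegral_ofReal
      (hw.continuousOn.integrableOn_compact isCompact_Icc) (ae_of_all _ fun x => (hpos x).le)]

theorem integral_weight_pos (hw : Continuous w) (hpos : ∀ x, 0 < w x) (hab : a < b) :
    0 < ∫ x in a..b, w x :=
  intervalIntegral.intervalIntegral_pos_of_pos (hw.intervalIntegrable a b) hpos hab

theorem withDensity_ofReal_Icc_ne_zero (hw : Continuous w) (hpos : ∀ x, 0 < w x) (hab : a < b) :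
    volume.withDensity (fun t => ENNReal.ofReal (w t)) (Icc a b) ≠ 0 := by
  rw [withDensity_ofReal_Icc hw hpos hab.le]
  exact (ENNReal.ofReal_pos.2 (integral_weight_pos hw hpos hab)).ne'

theorem withDensity_ofReal_Icc_ne_top (hw : Continuous w) (hpos : ∀ x, 0 < w x) (hab : a ≤ b) :
    volume.withDensity (fun t => ENNReal.ofReal (w t)) (Icc a b) ≠ ⊤ := by
  rw [withDensity_ofReal_Icc hw hpos hab]
  exact ENNReal.ofReal_ne_top

theorem isProbabilityMeasure_probWithDensityOn (hw : Continuous w) (hpos : ∀ x, 0 < w x)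
    (hab : a < b) : IsProbabilityMeasure (probWithDensityOn w a b) :=
  ProbabilityTheory.cond_isProbabilityMeasure_of_finite (withDensity_ofReal_Icc_ne_zero hw hpos hab)
    (withDensity_ofReal_Icc_ne_top hw hpos hab.le)

theorem probWithDensityOn_absolutelyContinuous (w : ℝ → ℝ) (a b : ℝ) :
    probWithDensityOn w a b ≪ volume.restrict (Icc a b) :=
  ((withDensity_absolutelyContinuous _ _).restrict _).smul_left _

theorem integral_probWithDensityOn (hw : Continuous w) (hpos : ∀ x, 0 < w x) (hab : a ≤ b)
    (F : ℝ → ℝ) :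
    ∫ x, F x ∂probWithDensityOn w a b = (∫ x in a..b, w x)⁻¹ * ∫ x in a..b, F x * w x := by
  have hnonneg : 0 ≤ ∫ x in a..b, w x :=
    intervalIntegral.integral_nonneg_of_forall hab fun x => (hpos x).le
  rw [probWithDensityOn, ProbabilityTheory.cond, integral_smul_measure,
    withDensity_ofReal_Icc hw hpos hab, ENNReal.toReal_inv, ENNReal.toReal_ofReal hnonneg,
    smul_eq_mul,
    setIntegral_withDensity_eq_setIntegral_toReal_smul hw.measurable.ennreal_ofReal
      (ae_of_all _ fun _ => ENNReal.ofReal_lt_top) _ measurableSet_Icc,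
    integral_Icc_eq_integral_Ioc, ← intervalIntegral.integral_of_le hab]
  simp only [ENNReal.toReal_ofReal (hpos _).le, smul_eq_mul, mul_comm (w _)]

theorem integrable_probWithDensityOn_iff (hw : Continuous w) (hpos : ∀ x, 0 < w x) (hab : a < b)
    {F : ℝ → ℝ} : Integrable F (probWithDensityOn w a b) ↔
      IntervalIntegrable (fun x => F x * w x) volume a b := by
  rw [probWithDensityOn, ProbabilityTheory.cond, integrable_smul_measure
      (ENNReal.inv_ne_zero.2 (withDensity_ofReal_Icc_ne_top hw hpos hab.le))
      (ENNReal.inv_ne_top.2 (withDensity_ofReal_Icc_ne_zero hw hpos hab)),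
    restrict_withDensity measurableSet_Icc,
    integrable_withDensity_iff_integrable_smul' hw.measurable.ennreal_ofReal
      (ae_of_all _ fun _ => ENNReal.ofReal_lt_top),
    intervalIntegrable_iff_integrableOn_Icc_of_le hab.le, IntegrableOn]
  simp only [ENNReal.toReal_ofReal (hpos _).le, smul_eq_mul, mul_comm (w _)]

theorem aestronglyMeasurable_probWithDensityOn {F : ℝ → ℝ} (hF : ContinuousOn F (Ioo a b)) :
    AEStronglyMeasurable F (probWithDensityOn w a b) := by
  refine AEStronglyMeasurable.mono_ac (probWithDensityOn_absolutelyContinuous w a b) ?_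
  rw [← Measure.restrict_congr_set Ioo_ae_eq_Icc]
  exact hF.aestronglyMeasurable measurableSet_Ioo

end ProbWithDensityOn

namespace IsSturmLiouvilleSolution

variable {w u u' : ℝ → ℝ} {lam a b c : ℝ}

theorem poincareOn (hu : IsSturmLiouvilleSolution w lam u u' (Ioo a b)) (hw : Continuous w)
    (hpos : ∀ x, 0 < w x) (hlam : 0 < lam) (hu' : ∀ x ∈ Ioo a b, 0 < u' x) (hc : c ∈ Ioo a b)
    (huc : u c = 0) : PoincareOn (probWithDensityOn w a b) (Ioo a b) lam⁻¹ := by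
  intro g g' hg hi hi'
  have hab : a < b := hc.1.trans hc.2
  have := isProbabilityMeasure_probWithDensityOn hw hpos hab
  have hgm : AEStronglyMeasurable g (probWithDensityOn w a b) :=
    aestronglyMeasurable_probWithDensityOn fun x hx => (hg x hx).continuousAt.continuousWithinAt
  have hgc : Integrable (fun x => (g x - g c) ^ 2) (probWithDensityOn w a b) :=
    (((memLp_two_iff_integrable_sq hgm).2 hi).sub (memLp_const (g c))).integrable_sq
  have hle := hu.integral_sq_sub_le (fun x _ => (hpos x).le) hu' hc huc hg
    ((integrable_probWithDensityOn_iff hw hpos hab).1 hgc)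
    ((integrable_probWithDensityOn_iff hw hpos hab).1 hi')
  refine (Var_le_integral_sq_sub _ g (g c)).trans ?_
  rw [integral_probWithDensityOn hw hpos hab.le, integral_probWithDensityOn hw hpos hab.le,
    mul_left_comm]
  exact mul_le_mul_of_nonneg_left ((le_inv_mul_iff₀ hlam).2 hle)
    (inv_nonneg.2 (integral_weight_pos hw hpos hab).le)

theorem integral_probWithDensityOn_eq_zero (hu : IsSturmLiouvilleSolution w lam u u' (Icc a b))
    (hw : Continuous w) (hpos : ∀ x, 0 < w x) (hlam : lam ≠ 0) (hab : a ≤ b) (ha : u' a = 0)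
    (hb : u' b = 0) : ∫ x, u x ∂probWithDensityOn w a b = 0 := by
  rw [← uIcc_of_le hab] at hu
  rw [integral_probWithDensityOn hw hpos hab,
    (mul_eq_zero.1 (hu.mul_integral_eq_zero hw.continuousOn ha hb)).resolve_left hlam, mul_zero]

theorem integral_sq_probWithDensityOn_eq (hu : IsSturmLiouvilleSolution w lam u u' (Icc a b))
    (hw : Continuous w) (hpos : ∀ x, 0 < w x) (hlam : lam ≠ 0) (hab : a ≤ b) (ha : u' a = 0)
    (hb : u' b = 0) :
    ∫ x, u x ^ 2 ∂probWithDensityOn w a b = lam⁻¹ * ∫ x, u' x ^ 2 ∂probWithDensityOn w a b := by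
  rw [← uIcc_of_le hab] at hu
  rw [integral_probWithDensityOn hw hpos hab, integral_probWithDensityOn hw hpos hab,
    ← hu.mul_integral_sq_eq hw.continuousOn (fun x _ => (hpos x).ne') ha hb, mul_left_comm,
    inv_mul_cancel_left₀ hlam]

theorem inv_le_of_poincareOn (hu : IsSturmLiouvilleSolution w lam u u' (Icc a b))
    (hw : Continuous w) (hpos : ∀ x, 0 < w x) (hlam : lam ≠ 0) (hab : a < b)
    (hu' : ∀ x ∈ Ioo a b, u' x ≠ 0) (ha : u' a = 0) (hb : u' b = 0) {C : ℝ}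
    (hC : PoincareOn (probWithDensityOn w a b) (Ioo a b) C) : lam⁻¹ ≤ C := by
  have := isProbabilityMeasure_probWithDensityOn hw hpos hab
  have hF_int : ∀ {F : ℝ → ℝ}, ContinuousOn F (Icc a b) →
      IntervalIntegrable (fun x => F x ^ 2 * w x) volume a b := fun hF =>
    ((hF.pow 2).mul hw.continuousOn).intervalIntegrable_of_Icc hab.le
  have hu'_cont : ContinuousOn u' (Icc a b) :=
    hu.continuousOn_deriv hw.continuousOn fun x _ => (hpos x).ne'
  have hu_memLp : MemLp u 2 (probWithDensityOn w a b) :=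
    (memLp_two_iff_integrable_sq (aestronglyMeasurable_probWithDensityOn
      (hu.continuousOn.mono Ioo_subset_Icc_self))).2
      ((integrable_probWithDensityOn_iff hw hpos hab).2 (hF_int hu.continuousOn))
  have henergy : 0 < ∫ x, u' x ^ 2 ∂probWithDensityOn w a b := by
    rw [integral_probWithDensityOn hw hpos hab.le]
    exact mul_pos (inv_pos.2 (integral_weight_pos hw hpos hab))
      (intervalIntegral.intervalIntegral_pos_of_pos_on (hF_int hu'_cont)
        (fun x hx => mul_pos (sq_pos_of_ne_zero (hu' x hx)) (hpos x)) hab)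
  exact hC.le_of_integral_sq_eq (fun x hx => hu.hasDerivAt x (Ioo_subset_Icc_self hx)) hu_memLp
    ((integrable_probWithDensityOn_iff hw hpos hab).2 (hF_int hu'_cont))
    (hu.integral_probWithDensityOn_eq_zero hw hpos hlam hab.le ha hb)
    (hu.integral_sq_probWithDensityOn_eq hw hpos hlam hab.le ha hb) henergy

end IsSturmLiouvilleSolution

/-! ### The double exponential weight -/

theorem hasDerivAt_of_eqOn_Iic_of_eqOn_Ici {f f₁ f₂ : ℝ → ℝ} {c x d : ℝ}
    (h₁ : EqOn f f₁ (Iic c)) (h₂ : EqOn f f₂ (Ici c)) (hd₁ : x ≤ c → HasDerivAt f₁ d x)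
    (hd₂ : c ≤ x → HasDerivAt f₂ d x) : HasDerivAt f d x := by
  have hleft : x ≤ c → HasDerivWithinAt f d (Iic c) x := fun hx =>
    (hd₁ hx).hasDerivWithinAt.congr h₁ (h₁ hx)
  have hright : c ≤ x → HasDerivWithinAt f d (Ici c) x := fun hx =>
    (hd₂ hx).hasDerivWithinAt.congr h₂ (h₂ hx)
  rcases lt_trichotomy x c with hx | rfl | hx
  · exact (hleft hx.le).hasDerivAt (Iic_mem_nhds hx)
  · rw [← hasDerivWithinAt_univ, ← Iic_union_Ici]
    exact (hleft le_rfl).union (hright le_rfl)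
  · exact (hright hx.le).hasDerivAt (Ici_mem_nhds hx)

/-- The density `e^{-|t|} / 2` of the double exponential measure. -/
noncomputable def doubleExpDensity (t : ℝ) : ℝ := (1 / 2) * exp (-|t|)

/-- The eigenfunction `e^{|x|/2} sin (ω x)` of the double exponential weight. -/
noncomputable def doubleExpEigenfun (ω x : ℝ) : ℝ := exp (|x| / 2) * sin (ω * x)

/-- The derivative of `doubleExpEigenfun ω`, in a form valid on both sides of the origin. -/
noncomputable def doubleExpEigenfunDeriv (ω x : ℝ) : ℝ :=
  exp (|x| / 2) * (sin (ω * |x|) / 2 + ω * cos (ω * |x|))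

theorem continuous_doubleExpDensity : Continuous doubleExpDensity := by
  unfold doubleExpDensity
  fun_prop

theorem doubleExpDensity_pos (t : ℝ) : 0 < doubleExpDensity t := by
  unfold doubleExpDensity
  positivity

theorem hasDerivAt_exp_mul_sin (c ω x : ℝ) :
    HasDerivAt (fun y => exp (c * y) * sin (ω * y))
      (exp (c * x) * (c * sin (ω * x) + ω * cos (ω * x))) x :=
  ((hasDerivAt_const_mul c).exp.fun_mul (hasDerivAt_const_mul ω).sin).congr_deriv (by ring)

theorem hasDerivAt_exp_neg_mul_flux (c ω x : ℝ) :
    HasDerivAt (fun y => exp (-c * y) * (c * sin (ω * y) + ω * cos (ω * y)))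
      (-(c ^ 2 + ω ^ 2) * (exp (-c * x) * sin (ω * x))) x :=
  ((hasDerivAt_const_mul (-c)).exp.fun_mul (((hasDerivAt_const_mul ω).sin.const_mul c).fun_add
    ((hasDerivAt_const_mul ω).cos.const_mul ω))).congr_deriv (by ring)

theorem doubleExpEigenfunDeriv_mul_density (ω x : ℝ) :
    doubleExpEigenfunDeriv ω x * doubleExpDensity x =
      1 / 2 * (exp (-(|x| / 2)) * (sin (ω * |x|) / 2 + ω * cos (ω * |x|))) := by
  have hexp : exp (|x| / 2) * exp (-|x|) = exp (-(|x| / 2)) := by rw [← exp_add]; ring_nf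
  rw [doubleExpEigenfunDeriv, doubleExpDensity]
  linear_combination 1 / 2 * (sin (ω * |x|) / 2 + ω * cos (ω * |x|)) * hexp

theorem doubleExpEigenfun_mul_density (ω x : ℝ) :
    doubleExpEigenfun ω x * doubleExpDensity x = 1 / 2 * (exp (-(|x| / 2)) * sin (ω * x)) := by
  have hexp : exp (|x| / 2) * exp (-|x|) = exp (-(|x| / 2)) := by rw [← exp_add]; ring_nf
  rw [doubleExpEigenfun, doubleExpDensity]
  linear_combination 1 / 2 * sin (ω * x) * hexp

theorem hasDerivAt_doubleExpEigenfun (ω x : ℝ) :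
    HasDerivAt (doubleExpEigenfun ω) (doubleExpEigenfunDeriv ω x) x := by
  refine hasDerivAt_of_eqOn_Iic_of_eqOn_Ici (c := 0)
    (f₁ := fun y => exp (-(1 / 2) * y) * sin (ω * y)) (f₂ := fun y => exp (1 / 2 * y) * sin (ω * y))
    (fun y hy => ?_) (fun y hy => ?_)
    (fun hx => (hasDerivAt_exp_mul_sin (-(1 / 2)) ω x).congr_deriv ?_)
    (fun hx => (hasDerivAt_exp_mul_sin (1 / 2) ω x).congr_deriv ?_)
  · rw [doubleExpEigenfun, abs_of_nonpos hy]; ring_nf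
  · rw [doubleExpEigenfun, abs_of_nonneg hy]; ring_nf
  · rw [doubleExpEigenfunDeriv, abs_of_nonpos hx, mul_neg, sin_neg, cos_neg]; ring_nf
  · rw [doubleExpEigenfunDeriv, abs_of_nonneg hx]; ring_nf

theorem hasDerivAt_doubleExpFlux (ω x : ℝ) :
    HasDerivAt (fun y => doubleExpEigenfunDeriv ω y * doubleExpDensity y)
      (-(1 / 4 + ω ^ 2) * (doubleExpEigenfun ω x * doubleExpDensity x)) x := by
  rw [doubleExpEigenfun_mul_density]
  simp only [doubleExpEigenfunDeriv_mul_density]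
  refine hasDerivAt_of_eqOn_Iic_of_eqOn_Ici (c := 0)
    (fun y hy => ?_) (fun y hy => ?_)
    (fun hx => ((hasDerivAt_exp_neg_mul_flux (-(1 / 2)) ω x).const_mul (1 / 2)).congr_deriv ?_)
    (fun hx => ((hasDerivAt_exp_neg_mul_flux (1 / 2) ω x).const_mul (1 / 2)).congr_deriv ?_)
  · rw [abs_of_nonpos hy, mul_neg, sin_neg, cos_neg]; ring_nf
  · rw [abs_of_nonneg hy]; ring_nf
  · rw [abs_of_nonpos hx]; ring_nf
  · rw [abs_of_nonneg hx]; ring_nf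

theorem isSturmLiouvilleSolution_doubleExp (ω : ℝ) (s : Set ℝ) :
    IsSturmLiouvilleSolution doubleExpDensity (1 / 4 + ω ^ 2) (doubleExpEigenfun ω)
      (doubleExpEigenfunDeriv ω) s :=
  ⟨fun x _ => hasDerivAt_doubleExpEigenfun ω x, fun x _ => hasDerivAt_doubleExpFlux ω x⟩

theorem doubleExpEigenfunDeriv_eq_zero {b ω x : ℝ} (hneu : sin (ω * b) + 2 * ω * cos (ω * b) = 0)
    (hx : |x| = b) : doubleExpEigenfunDeriv ω x = 0 := by
  rw [doubleExpEigenfunDeriv, hx]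
  linear_combination exp (b / 2) / 2 * hneu

theorem doubleExpEigenfunDeriv_pos {b ω x : ℝ} (hω : 0 < ω) (hωb : ω * b < π)
    (hneu : sin (ω * b) + 2 * ω * cos (ω * b) = 0) (hx : |x| < b) :
    0 < doubleExpEigenfunDeriv ω x := by
  have hωx : 0 ≤ ω * |x| := mul_nonneg hω.le (abs_nonneg x)
  have hωxb : ω * |x| < ω * b := mul_lt_mul_of_pos_left hx hω
  have hsinb : 0 < sin (ω * b) := sin_pos_of_pos_of_lt_pi (hωx.trans_lt hωxb) hωb
  have hsub : 0 < sin (ω * b - ω * |x|) := sin_pos_of_pos_of_lt_pi (by linarith) (by linarith)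
  have hkey : sin (ω * b) * (sin (ω * |x|) / 2 + ω * cos (ω * |x|)) =
      ω * sin (ω * b - ω * |x|) := by
    rw [sin_sub]
    linear_combination sin (ω * |x|) / 2 * hneu
  exact mul_pos (exp_pos _) (pos_of_mul_pos_right (hkey ▸ mul_pos hω hsub) hsinb.le)

theorem strictAntiOn_two_cot_add_inv {b : ℝ} (hb : 0 < b) :
    StrictAntiOn (fun x => 2 * (cos (b * x) / sin (b * x)) + 1 / x) (Ioo 0 (π / b)) := by
  intro x hx y hy hxy
  have hyb : b * y < π := (lt_div_iff₀' hb).1 hy.2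
  have hbx : 0 < b * x := mul_pos hb hx.1
  have hbxy : b * x < b * y := mul_lt_mul_of_pos_left hxy hb
  have hsx : 0 < sin (b * x) := sin_pos_of_pos_of_lt_pi hbx (hbxy.trans hyb)
  have hsy : 0 < sin (b * y) := sin_pos_of_pos_of_lt_pi (hbx.trans hbxy) hyb
  have hsub : 0 < sin (b * y - b * x) := sin_pos_of_pos_of_lt_pi (by linarith) (by linarith)
  rw [sin_sub] at hsub
  have hcot : cos (b * y) / sin (b * y) < cos (b * x) / sin (b * x) := by
    rw [div_lt_div_iff₀ hsy hsx]
    linarith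
  have hinv : 1 / y < 1 / x := one_div_lt_one_div_of_lt hx.1 hxy
  exact add_lt_add (by linarith) hinv

theorem sin_add_two_mul_cos_eq_zero {b ω : ℝ} (hω : ω ≠ 0)
    (hzero : 2 * (cos (b * ω) / sin (b * ω)) + 1 / ω = 0) :
    sin (ω * b) + 2 * ω * cos (ω * b) = 0 := by
  -- If the sine vanished, the convention `x / 0 = 0` would turn `hzero` into `1 / ω = 0`.
  have hsin : sin (b * ω) ≠ 0 := fun h => by simp [h, hω] at hzero
  rw [mul_comm ω b]
  field_simp at hzero
  linarith

/-- the double exponential measure restricted to `[-b,b]` has optimal Poincaré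
constant `(1/4 + ω²)⁻¹`, with `ω` the unique zero of `x ↦ 2 cotan(bx) + 1/x` on `(0, π/b)`,
saturated by `f(x) = e^{|x|/2} sin(ωx)`. -/
theorem stmt12 (b : ℝ) (hb : 0 < b) (ν μ : Measure ℝ)
    (hν : ν = MeasureTheory.volume.withDensity fun t =>
      ENNReal.ofReal ((1/2) * Real.exp (-|t|)))
    (hμ : μ = (ν (Set.Icc (-b) b))⁻¹ • ν.restrict (Set.Icc (-b) b))
    (ω : ℝ) (hω : ω ∈ Set.Ioo 0 (Real.pi / b))
    (hzero : 2 * (Real.cos (b * ω) / Real.sin (b * ω)) + 1/ω = 0)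
    (C : ℝ) (hC : C = (1/4 + ω^2)⁻¹)
    (f : ℝ → ℝ) (hf : ∀ x, f x = Real.exp (|x|/2) * Real.sin (ω * x)) :
    (∀ x ∈ Set.Ioo 0 (Real.pi / b),
      2 * (Real.cos (b * x) / Real.sin (b * x)) + 1/x = 0 → x = ω) ∧
    PoincareOn μ (Set.Ioo (-b) b) C ∧
    (∀ C', 0 ≤ C' → PoincareOn μ (Set.Ioo (-b) b) C' → C ≤ C') ∧
    (∫ x, f x ∂μ = 0) ∧
    (∫ x, (f x)^2 ∂μ = C * ∫ x, (deriv f x)^2 ∂μ) := by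
  obtain rfl : μ = probWithDensityOn doubleExpDensity (-b) b := by rw [hμ, hν]; rfl
  obtain rfl : f = doubleExpEigenfun ω := funext hf
  have hbb : -b < b := neg_lt_self hb
  have hlam : 0 < 1 / 4 + ω ^ 2 := by positivity
  have hw := continuous_doubleExpDensity
  have hw0 := doubleExpDensity_pos
  have hu := isSturmLiouvilleSolution_doubleExp ω
  have hneu := sin_add_two_mul_cos_eq_zero hω.1.ne' hzero
  have hleft : doubleExpEigenfunDeriv ω (-b) = 0 :=
    doubleExpEigenfunDeriv_eq_zero hneu (by rw [abs_neg, abs_of_pos hb])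
  have hright : doubleExpEigenfunDeriv ω b = 0 :=
    doubleExpEigenfunDeriv_eq_zero hneu (abs_of_pos hb)
  have hu' : ∀ x ∈ Ioo (-b) b, 0 < doubleExpEigenfunDeriv ω x := fun x hx =>
    doubleExpEigenfunDeriv_pos hω.1 ((lt_div_iff₀ hb).1 hω.2) hneu (abs_lt.2 hx)
  have hderiv : deriv (doubleExpEigenfun ω) = doubleExpEigenfunDeriv ω :=
    funext fun x => (hasDerivAt_doubleExpEigenfun ω x).deriv
  rw [hC, hderiv]
  exact ⟨fun x hx hx0 => (strictAntiOn_two_cot_add_inv hb).injOn hx hω (hx0.trans hzero.symm),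
    (hu _).poincareOn hw hw0 hlam hu' ⟨neg_lt_zero.2 hb, hb⟩ (by simp [doubleExpEigenfun]),
    fun C' _ => (hu _).inv_le_of_poincareOn hw hw0 hlam.ne' hbb (fun x hx => (hu' x hx).ne')
      hleft hright,
    (hu _).integral_probWithDensityOn_eq_zero hw hw0 hlam.ne' hbb.le hleft hright,
    (hu _).integral_sq_probWithDensityOn_eq hw hw0 hlam.ne' hbb.le hleft hright⟩
end
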